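/- arXiv:1407.6984 — 2 statements merged into one kernel-verified Lean document; each statement's English description precedes it below -/
import Mathlib

section
/- For every T > 0 there exist a constant C = C(d,λ,T) < ∞ and a constant δ = δ(d,λ,T) > 0, both depending only on d, λ and T, such that for all a ∈ Ω and all y ∈ ℤ^d, Σ_{x∈ℤ^d} (|G_T(a;x,y)|² + |∇_x G_T(a;x,y)|²) e^{δ|x−y|} ≤ C. -/
/-!
The proof is an Agmon-type energy estimate. Test the equation `(1/T) G + ∇*(a∇G) = δ_y` with `w G`,
where `w(x) = exp (δ min(|x - y|, N))` is a bounded weight with `w(y) = 1`. Summation by parts is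
legitimate because `G ∈ ℓ²` and `w` is bounded, and the discrete product rule
`∇ᵢ(wG)(x) = w(x) ∇ᵢG(x) + ∇ᵢw(x) G(x + eᵢ)` gives

`(1/T) ∑ w G² + ∑ w ∇G·a∇G = G(y) - ∑ ∑ᵢ ∇ᵢw(x) G(x + eᵢ) (a∇G)ᵢ(x)`.

With `κ = e^δ - 1` the weight satisfies `|∇ᵢw(x)| ≤ κ min(w(x), w(x + eᵢ))`, so by Young's inequality
the error term is at most `(κ d/2) ∑ w G² + (κ/2) ∑ w |∇G|²`. For `κ ≤ min(1/(2Td), λ)` it is absorbed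
by the left-hand side, as is `G(y) ≤ G(y)²/(4T) + T` (`weighted_energy`). The resulting bound does not
depend on the truncation level `N`; taking `N` large on each finite set of lattice points gives
summability and the bound for the untruncated weight.
-/


open MeasureTheory
open scoped ENNReal

namespace StochHom

noncomputable section


/-- The lattice `ℤ^d`. -/
abbrev Lat (d : ℕ) := Fin d → ℤ

/-- The `i`-th coordinate unit vector of `ℤ^d`. -/
def unitv (d : ℕ) (i : Fin d) : Lat d := fun j => if j = i then 1 else 0

/-- Euclidean norm of a vector in `ℝ^d`. -/
noncomputable def vnorm {d : ℕ} (v : Fin d → ℝ) : ℝ := Real.sqrt (∑ i, (v i) ^ 2)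

/-- Euclidean norm of a lattice point. -/
noncomputable def latnorm {d : ℕ} (x : Lat d) : ℝ := vnorm (fun i => (x i : ℝ))

/-- Discrete gradient `∇u(x) = (u(x+eᵢ) - u(x))ᵢ`. -/
def dgrad {d : ℕ} (u : Lat d → ℝ) (x : Lat d) : Fin d → ℝ :=
  fun i => u (x + unitv d i) - u x

/-- Discrete negative divergence `∇*g(x) = Σᵢ (gᵢ(x-eᵢ) - gᵢ(x))`. -/
def ddiv {d : ℕ} (g : Lat d → Fin d → ℝ) (x : Lat d) : ℝ :=
  ∑ i, (g (x - unitv d i) i - g x i)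

/-- Matrix-vector multiplication for a `d×d` matrix given as `Fin d → Fin d → ℝ`. -/
def mulVec' {d : ℕ} (A : Fin d → Fin d → ℝ) (v : Fin d → ℝ) : Fin d → ℝ :=
  fun i => ∑ j, A i j * v j

/-- The ellipticity condition defining `Ω₀`: `v·Av ≥ λ|v|²` and `|Av| ≤ |v|`. -/
def IsElliptic (d : ℕ) (lam : ℝ) (A : Fin d → Fin d → ℝ) : Prop :=
  (∀ v : Fin d → ℝ, lam * ∑ i, (v i) ^ 2 ≤ ∑ i, v i * mulVec' A v i) ∧
  (∀ v : Fin d → ℝ, vnorm (mulVec' A v) ≤ vnorm v)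

/-- The space `Ω = Ω₀^{ℤ^d}` of admissible coefficient fields. -/
abbrev Coeff (d : ℕ) (lam : ℝ) :=
  {a : Lat d → Fin d → Fin d → ℝ // ∀ x, IsElliptic d lam (a x)}

/-- Shift of a coefficient field: `(τ_z a)(x) = a(x+z)`. -/
def shift {d : ℕ} {lam : ℝ} (z : Lat d) (a : Coeff d lam) : Coeff d lam :=
  ⟨fun x => a.1 (x + z), fun x => a.2 (x + z)⟩

/-- Stationarity of an ensemble: every shift is measure preserving. -/
def Stationary {d : ℕ} {lam : ℝ} (μ : Measure (Coeff d lam)) : Prop :=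
  ∀ z : Lat d, MeasurePreserving (shift z) μ μ

/-- Coefficient fields agreeing with `a` outside of `x`. -/
def sameOutside {d : ℕ} {lam : ℝ} (a : Coeff d lam) (x : Lat d) :
    Set (Coeff d lam) :=
  {b | ∀ y, y ≠ x → b.1 y = a.1 y}

/-- The oscillation `osc_{a(x)} ζ`. -/
noncomputable def osc {d : ℕ} {lam : ℝ} (ζ : Coeff d lam → ℝ) (a : Coeff d lam)
    (x : Lat d) : ℝ :=
  sSup (ζ '' sameOutside a x) - sInf (ζ '' sameOutside a x)

/-- Membership in `C_b(Ω)`: bounded continuous functions. -/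
def MemCb {d : ℕ} {lam : ℝ} (ζ : Coeff d lam → ℝ) : Prop :=
  Continuous ζ ∧ ∃ M, ∀ a, |ζ a| ≤ M

/-- The logarithmic Sobolev inequality with constant `ρ`. -/
def SatisfiesLSI {d : ℕ} {lam : ℝ} (μ : Measure (Coeff d lam)) (ρ : ℝ) : Prop :=
  ∀ ζ : Coeff d lam → ℝ, MemCb ζ →
    ∫ a, (ζ a) ^ 2 * Real.log ((ζ a) ^ 2 / ∫ b, (ζ b) ^ 2 ∂μ) ∂μ
      ≤ (1 / (2 * ρ)) * ∫ a, ∑' x : Lat d, (osc ζ a x) ^ 2 ∂μ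

/-- The spectral gap inequality with constant `ρ`. -/
def SatisfiesSG {d : ℕ} {lam : ℝ} (μ : Measure (Coeff d lam)) (ρ : ℝ) : Prop :=
  ∀ ζ : Coeff d lam → ℝ, MemCb ζ →
    ∫ a, (ζ a - ∫ b, ζ b ∂μ) ^ 2 ∂μ
      ≤ (1 / ρ) * ∫ a, ∑' x : Lat d, (osc ζ a x) ^ 2 ∂μ

/-- `φ` is a bounded solution of the modified corrector equation
`(1/T)φ + ∇*(a∇φ) = -∇*(aξ)` on `ℤ^d`. -/
def IsModCorrector (d : ℕ) (T : ℝ) (ξ : Fin d → ℝ)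
    (a : Lat d → Fin d → Fin d → ℝ) (φ : Lat d → ℝ) : Prop :=
  (∃ M, ∀ x, |φ x| ≤ M) ∧
  ∀ x, (1 / T) * φ x + ddiv (fun y => mulVec' (a y) (dgrad φ y)) x
      = - ddiv (fun y => mulVec' (a y) ξ) x

/-- `G` is the `ℓ²` Green's function of `(1/T) + ∇*(a∇·)` with pole at `y`. -/
def IsGreen (d : ℕ) (T : ℝ) (a : Lat d → Fin d → Fin d → ℝ) (y : Lat d)
    (G : Lat d → ℝ) : Prop :=
  Summable (fun x => (G x) ^ 2) ∧
  ∀ x, (1 / T) * G x + ddiv (fun z => mulVec' (a z) (dgrad G z)) x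
      = if x = y then 1 else 0

/-- Spectral norm (Euclidean operator norm) of a `d×d` matrix. -/
noncomputable def specNorm {d : ℕ} (A : Fin d → Fin d → ℝ) : ℝ :=
  sSup {r : ℝ | ∃ v : Fin d → ℝ, vnorm v ≤ 1 ∧ r = vnorm (mulVec' A v)}

/-! ### Euclidean norms and the exponential weight -/

lemma vnorm_sq {d : ℕ} (v : Fin d → ℝ) : vnorm v ^ 2 = ∑ i, (v i) ^ 2 :=
  Real.sq_sqrt (Finset.sum_nonneg fun _ _ => sq_nonneg _)

lemma latnorm_eq {d : ℕ} (x : Lat d) :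
    latnorm x = ‖(WithLp.toLp 2 (fun i => (x i : ℝ)) : EuclideanSpace ℝ (Fin d))‖ := by
  simp [latnorm, vnorm, EuclideanSpace.norm_eq]

lemma abs_latnorm_sub_le {d : ℕ} (x : Lat d) (i : Fin d) :
    |latnorm (x + unitv d i) - latnorm x| ≤ 1 := by
  rw [latnorm_eq, latnorm_eq]
  refine (abs_norm_sub_norm_le _ _).trans (le_of_eq ?_)
  have : (WithLp.toLp 2 (fun j => ((x + unitv d i) j : ℝ)) : EuclideanSpace ℝ (Fin d))
      - WithLp.toLp 2 (fun j => (x j : ℝ)) = EuclideanSpace.single i (1 : ℝ) := by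
    ext j
    by_cases h : j = i <;> simp [unitv, h]
  rw [this]
  simp

lemma exp_sub_exp_le {δ s t : ℝ} (hδ : 0 ≤ δ) (h : |s - t| ≤ 1) :
    |Real.exp (δ * s) - Real.exp (δ * t)| ≤ (Real.exp δ - 1) * Real.exp (δ * t) := by
  have h1 := (abs_le.1 h).1
  have h2 := (abs_le.1 h).2
  have e : Real.exp (δ * s) = Real.exp (δ * (s - t)) * Real.exp (δ * t) := by
    rw [← Real.exp_add]; ring_nf
  have u : Real.exp (δ * (s - t)) ≤ Real.exp δ := Real.exp_le_exp.2 (by nlinarith)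
  have l : Real.exp (-δ) ≤ Real.exp (δ * (s - t)) := Real.exp_le_exp.2 (by nlinarith)
  have m : 2 - Real.exp δ ≤ Real.exp (-δ) := by
    have p := Real.exp_pos δ
    rw [Real.exp_neg, ← sub_nonneg]
    have : (Real.exp δ)⁻¹ - (2 - Real.exp δ) = (Real.exp δ - 1) ^ 2 / Real.exp δ := by
      field_simp; ring
    rw [this]; positivity
  have p := Real.exp_pos (δ * t)
  rw [e, abs_le]
  constructor <;> nlinarith

/-! ### Summability and summation by parts -/

lemma summable_sq_shift {d : ℕ} {f : Lat d → ℝ} (hf : Summable fun x => f x ^ 2) (z : Lat d) :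
    Summable fun x => f (x + z) ^ 2 :=
  hf.comp_injective (i := fun x : Lat d => x + z) (add_left_injective z)

lemma summable_mul_of_sq {ι : Type*} {f g : ι → ℝ} (hf : Summable fun x => f x ^ 2)
    (hg : Summable fun x => g x ^ 2) : Summable fun x => f x * g x := by
  refine Summable.of_norm_bounded (hf.add hg) fun x => ?_
  rw [Real.norm_eq_abs, abs_le]
  constructor <;> nlinarith [sq_nonneg (f x + g x), sq_nonneg (f x - g x), sq_nonneg (f x),
    sq_nonneg (g x)]

lemma hasSum_mul_ddiv {d : ℕ} {u : Lat d → ℝ} {g : Lat d → Fin d → ℝ}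
    (hu : Summable fun x => u x ^ 2) (hg : ∀ i, Summable fun x => g x i ^ 2) :
    Summable (fun x => ∑ i, dgrad u x i * g x i) ∧
    HasSum (fun x => u x * ddiv g x) (∑' x, ∑ i, dgrad u x i * g x i) := by
  have s1 : ∀ i, Summable fun x => u (x + unitv d i) * g x i := fun i =>
    summable_mul_of_sq (summable_sq_shift hu _) (hg i)
  have s2 : ∀ i, Summable fun x => u x * g x i := fun i => summable_mul_of_sq hu (hg i)
  have s3 : ∀ i, HasSum (fun x => u x * g (x - unitv d i) i)
      (∑' x, u (x + unitv d i) * g x i) := fun i => by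
    rw [← (Equiv.addRight (unitv d i)).hasSum_iff]
    convert (s1 i).hasSum using 1
    funext x
    simp
  have s4 : ∀ i, HasSum (fun x => dgrad u x i * g x i)
      (∑' x, u (x + unitv d i) * g x i - ∑' x, u x * g x i) := fun i => by
    have e : (fun x => dgrad u x i * g x i)
        = fun x => u (x + unitv d i) * g x i - u x * g x i := by
      funext x
      simp only [dgrad]; ring
    rw [e]
    exact (s1 i).hasSum.sub (s2 i).hasSum
  have s5 := hasSum_sum fun i (_ : i ∈ Finset.univ) => s4 i
  refine ⟨s5.summable, ?_⟩
  rw [s5.tsum_eq]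
  simp only [ddiv, Finset.mul_sum, mul_sub]
  exact hasSum_sum fun i _ => (s3 i).sub (s2 i).hasSum

/-! ### The weighted energy estimate -/

/-- Discrete product rule, ellipticity and Young's inequality at a single lattice point: the energy
density of the test function `w G` against the flux controls `w |∇G|²` up to terms of order `κ`. -/
lemma energy_density {d : ℕ} {lam κ : ℝ} {A : Fin d → Fin d → ℝ} (hA : IsElliptic d lam A)
    {w G : Lat d → ℝ} (x : Lat d) (hw : 0 ≤ w x) (hκ : 0 ≤ κ)
    (h1 : ∀ i, |w (x + unitv d i) - w x| ≤ κ * w (x + unitv d i))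
    (h2 : ∀ i, |w (x + unitv d i) - w x| ≤ κ * w x) :
    (lam - κ / 2) * (w x * ∑ i, dgrad G x i ^ 2)
        - κ / 2 * ∑ i, w (x + unitv d i) * G (x + unitv d i) ^ 2
      ≤ ∑ i, dgrad (fun z => w z * G z) x i * mulVec' A (dgrad G x) i := by
  have hg : ∑ i, mulVec' A (dgrad G x) i ^ 2 ≤ ∑ i, dgrad G x i ^ 2 := by
    rw [← vnorm_sq, ← vnorm_sq]
    exact pow_le_pow_left₀ (Real.sqrt_nonneg _) (hA.2 _) 2
  have he := mul_le_mul_of_nonneg_left (hA.1 (dgrad G x)) hw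
  set g := mulVec' A (dgrad G x)
  have hi : ∀ i, w x * (dgrad G x i * g i) - κ / 2 * (w (x + unitv d i) * G (x + unitv d i) ^ 2)
      - κ / 2 * (w x * g i ^ 2) ≤ dgrad (fun z => w z * G z) x i * g i := fun i => by
    have e : dgrad (fun z => w z * G z) x i * g i = w x * (dgrad G x i * g i)
        + (w (x + unitv d i) - w x) * (G (x + unitv d i) * g i) := by
      simp only [dgrad]; ring
    rw [e]
    set D := w (x + unitv d i) - w x
    set G' := G (x + unitv d i)
    have a1 : |D| * G' ^ 2 ≤ κ * w (x + unitv d i) * G' ^ 2 :=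
      mul_le_mul_of_nonneg_right (h1 i) (sq_nonneg _)
    have a2 : |D| * g i ^ 2 ≤ κ * w x * g i ^ 2 :=
      mul_le_mul_of_nonneg_right (h2 i) (sq_nonneg _)
    have a3 : -(|D| * (G' ^ 2 + g i ^ 2) / 2) ≤ D * (G' * g i) := by
      have := neg_abs_le (D * (G' * g i))
      rw [abs_mul] at this
      have y : |G' * g i| ≤ (G' ^ 2 + g i ^ 2) / 2 := by
        rw [abs_le]
        constructor <;> nlinarith [sq_nonneg (G' + g i), sq_nonneg (G' - g i)]
      nlinarith [mul_le_mul_of_nonneg_left y (abs_nonneg D)]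
    linarith
  have hs := Finset.sum_le_sum fun i (_ : i ∈ Finset.univ) => hi i
  simp only [Finset.sum_sub_distrib, ← Finset.mul_sum] at hs
  have := mul_le_mul_of_nonneg_left (mul_le_mul_of_nonneg_left hg hw) (by positivity : 0 ≤ κ / 2)
  linarith

/-- The energy estimate for a bounded weight `w` that varies slowly, by a factor of at most
`1 + κ` per lattice step. The bound does not involve the upper bound `W` of the weight. -/
lemma weighted_energy {d : ℕ} {lam T κ W : ℝ} (hT : 0 < T) (hκ : 0 ≤ κ)
    (hκ1 : κ ≤ lam) (hκ2 : κ * d ≤ 1 / (2 * T))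
    {a : Lat d → Fin d → Fin d → ℝ} (ha : ∀ x, IsElliptic d lam (a x))
    {y : Lat d} {G : Lat d → ℝ} (hG : IsGreen d T a y G)
    {w : Lat d → ℝ} (hw : ∀ x, 0 ≤ w x) (hW : ∀ x, w x ≤ W) (hwy : w y = 1)
    (h1 : ∀ x i, |w (x + unitv d i) - w x| ≤ κ * w (x + unitv d i))
    (h2 : ∀ x i, |w (x + unitv d i) - w x| ≤ κ * w x) :
    Summable (fun x => (G x ^ 2 + vnorm (dgrad G x) ^ 2) * w x) ∧
      min (1 / (2 * T)) (lam / 2) * ∑' x, (G x ^ 2 + vnorm (dgrad G x) ^ 2) * w x ≤ T := by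
  obtain ⟨hG2, hGe⟩ := hG
  have sgrad : ∀ i, Summable fun x => dgrad G x i ^ 2 := fun i => by
    refine Summable.of_nonneg_of_le (fun x => sq_nonneg _) (fun x => ?_)
      (((summable_sq_shift hG2 (unitv d i)).add hG2).mul_left 2)
    simp only [dgrad]
    nlinarith [sq_nonneg (G (x + unitv d i) + G x)]
  have sgrad' : Summable fun x => ∑ i, dgrad G x i ^ 2 := summable_sum fun i _ => sgrad i
  have sflux : ∀ i, Summable fun x => mulVec' (a x) (dgrad G x) i ^ 2 := fun i => by
    refine Summable.of_nonneg_of_le (fun x => sq_nonneg _) (fun x => ?_) sgrad'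
    rw [← vnorm_sq]
    have hv : 0 ≤ vnorm (mulVec' (a x) (dgrad G x)) := Real.sqrt_nonneg _
    refine le_trans ?_ (pow_le_pow_left₀ hv ((ha x).2 _) 2)
    rw [vnorm_sq]
    exact Finset.single_le_sum (f := fun i => mulVec' (a x) (dgrad G x) i ^ 2)
      (fun j _ => sq_nonneg _) (Finset.mem_univ i)
  have weighted : ∀ f : Lat d → ℝ, (∀ x, 0 ≤ f x) → Summable f → Summable fun x => w x * f x :=
    fun f hf hs => Summable.of_nonneg_of_le (fun x => mul_nonneg (hw x) (hf x))
      (fun x => mul_le_mul_of_nonneg_right (hW x) (hf x)) (hs.mul_left W)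
  have swG : Summable fun x => w x * G x ^ 2 := weighted _ (fun x => sq_nonneg _) hG2
  have swD : Summable fun x => w x * ∑ i, dgrad G x i ^ 2 :=
    weighted _ (fun x => Finset.sum_nonneg fun i _ => sq_nonneg _) sgrad'
  have su : Summable fun x => (w x * G x) ^ 2 := by
    refine (weighted _ (fun x => mul_nonneg (hw x) (sq_nonneg _)) swG).congr fun x => ?_
    ring
  obtain ⟨sE, hE⟩ := hasSum_mul_ddiv (u := fun x => w x * G x)
    (g := fun z => mulVec' (a z) (dgrad G z)) su sflux
  -- Multiply the equation by `w G` and sum over the lattice.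
  have test : 1 / T * ∑' x, w x * G x ^ 2
      + ∑' x, ∑ i, dgrad (fun z => w z * G z) x i * mulVec' (a x) (dgrad G x) i = G y := by
    have hs := (swG.hasSum.mul_left (1 / T)).add hE
    have hp : HasSum (fun x => 1 / T * (w x * G x ^ 2)
        + w x * G x * ddiv (fun z => mulVec' (a z) (dgrad G z)) x) (G y) := by
      have := hasSum_ite_eq y (G y)
      convert this using 1
      funext x
      have e := congrArg (fun t => w x * G x * t) (hGe x)
      by_cases h : x = y
      · subst h
        simp only [if_true, hwy] at e ⊢
        linarith
      · simp only [h, if_false] at e ⊢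
        linarith
    exact hs.unique hp
  have sshift : ∀ i, HasSum (fun x => w (x + unitv d i) * G (x + unitv d i) ^ 2)
      (∑' x, w x * G x ^ 2) := fun i =>
    (Equiv.addRight (unitv d i)).hasSum_iff (f := fun x => w x * G x ^ 2) |>.2 swG.hasSum
  have hlow := hasSum_le (fun x => energy_density (ha x) (G := G) x (hw x) hκ (h1 x) (h2 x))
    ((swD.hasSum.mul_left (lam - κ / 2)).sub
      ((hasSum_sum fun i (_ : i ∈ Finset.univ) => sshift i).mul_left (κ / 2))) sE.hasSum
  simp only [Finset.sum_const, Finset.card_univ, Fintype.card_fin, nsmul_eq_mul] at hlow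
  have hy : G y ^ 2 ≤ ∑' x, w x * G x ^ 2 := by
    have := swG.le_tsum y fun x _ => mul_nonneg (hw x) (sq_nonneg _)
    rwa [hwy, one_mul] at this
  have hGy : G y ≤ 1 / (4 * T) * G y ^ 2 + T := by
    rw [← sub_nonneg]
    have : 1 / (4 * T) * G y ^ 2 + T - G y = (G y - 2 * T) ^ 2 / (4 * T) := by field_simp; ring
    rw [this]; positivity
  have hsum : HasSum (fun x => (G x ^ 2 + vnorm (dgrad G x) ^ 2) * w x)
      (∑' x, w x * G x ^ 2 + ∑' x, w x * ∑ i, dgrad G x i ^ 2) := by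
    convert swG.hasSum.add swD.hasSum using 1
    funext x
    rw [vnorm_sq]; ring
  refine ⟨hsum.summable, ?_⟩
  rw [hsum.tsum_eq]
  have hA0 : 0 ≤ ∑' x, w x * G x ^ 2 := tsum_nonneg fun x => mul_nonneg (hw x) (sq_nonneg _)
  have hB0 : 0 ≤ ∑' x, w x * ∑ i, dgrad G x i ^ 2 :=
    tsum_nonneg fun x => mul_nonneg (hw x) (Finset.sum_nonneg fun i _ => sq_nonneg _)
  generalize ∑' x, w x * G x ^ 2 = A at *
  generalize ∑' x, w x * ∑ i, dgrad G x i ^ 2 = B at *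
  have m1 := mul_le_mul_of_nonneg_right (min_le_left (1 / (2 * T)) (lam / 2)) hA0
  have m2 := mul_le_mul_of_nonneg_right (min_le_right (1 / (2 * T)) (lam / 2)) hB0
  have m3 := mul_le_mul_of_nonneg_right hκ2 hA0
  have m4 := mul_le_mul_of_nonneg_right hκ1 hB0
  have m5 := mul_le_mul_of_nonneg_left hy (by positivity : 0 ≤ 1 / (4 * T))
  have t1 : 1 / (2 * T) = 2 * (1 / (4 * T)) := by field_simp; norm_num
  have t2 : 1 / T = 4 * (1 / (4 * T)) := by field_simp
  rw [mul_add]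
  rw [t1] at m1 m2 m3 ⊢
  rw [t2] at test
  linarith

/-- Lemma 1: exponentially weighted integrability of the Green's
function and its gradient, uniformly in `a ∈ Ω` and `y ∈ ℤ^d`. -/
theorem statement4 (d : ℕ) (hd : 2 ≤ d) (lam : ℝ) (hlam0 : 0 < lam) (hlam1 : lam ≤ 1)
    (T : ℝ) (hT : 0 < T) :
    ∃ C : ℝ, 0 < C ∧ ∃ δ : ℝ, 0 < δ ∧
      ∀ a : Lat d → Fin d → Fin d → ℝ, (∀ x, IsElliptic d lam (a x)) →
      ∀ y : Lat d, ∀ G : Lat d → ℝ, IsGreen d T a y G →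
        Summable (fun x : Lat d =>
          ((G x) ^ 2 + vnorm (dgrad G x) ^ 2) * Real.exp (δ * latnorm (x - y))) ∧
        ∑' x : Lat d,
            ((G x) ^ 2 + vnorm (dgrad G x) ^ 2) * Real.exp (δ * latnorm (x - y)) ≤ C := by
  have hd0 : (0 : ℝ) < d := by exact_mod_cast (by omega : 0 < d)
  set κ : ℝ := min lam (1 / (2 * T * d)) with hκdef
  have hκ : 0 < κ := lt_min hlam0 (by positivity)
  have hκ2 : κ * d ≤ 1 / (2 * T) := by
    have := mul_le_mul_of_nonneg_right (min_le_right lam (1 / (2 * T * d))) hd0.le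
    refine this.trans (le_of_eq ?_)
    field_simp
  set δ := Real.log (1 + κ) with hδdef
  have hδ : 0 < δ := Real.log_pos (by linarith)
  have hexp : Real.exp δ - 1 = κ := by
    rw [hδdef, Real.exp_log (by linarith)]; ring
  set m : ℝ := min (1 / (2 * T)) (lam / 2) with hm
  have hm0 : 0 < m := lt_min (by positivity) (by positivity)
  refine ⟨T / m, by positivity, δ, hδ, fun a ha y G hG => ?_⟩
  have hnn : ∀ x : Lat d, 0 ≤ ((G x) ^ 2 + vnorm (dgrad G x) ^ 2)
      * Real.exp (δ * latnorm (x - y)) := fun x => by positivity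
  have key : ∀ F : Finset (Lat d), ∑ x ∈ F, ((G x) ^ 2 + vnorm (dgrad G x) ^ 2)
      * Real.exp (δ * latnorm (x - y)) ≤ T / m := fun F => by
    have hlat : ∀ x : Lat d, 0 ≤ latnorm x := fun x => Real.sqrt_nonneg _
    -- A truncation level that is not reached on `F`.
    set N : ℝ := ∑ x ∈ F, latnorm (x - y) with hN
    have hN0 : 0 ≤ N := Finset.sum_nonneg fun x _ => hlat _
    have lip : ∀ x i, |min (latnorm (x + unitv d i - y)) N - min (latnorm (x - y)) N| ≤ 1 :=
      fun x i => by
        refine (abs_min_sub_min_le_max _ _ _ _).trans ?_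
        rw [sub_self, abs_zero]
        refine max_le ?_ zero_le_one
        rw [add_sub_right_comm]
        exact abs_latnorm_sub_le _ _
    obtain ⟨hs, hle⟩ := weighted_energy (W := Real.exp (δ * N)) hT hκ.le (min_le_left _ _) hκ2 ha hG
      (w := fun x => Real.exp (δ * min (latnorm (x - y)) N)) (fun x => (Real.exp_pos _).le)
      (fun x => Real.exp_le_exp.2 (mul_le_mul_of_nonneg_left (min_le_right _ _) hδ.le))
      (by simp [latnorm, vnorm, hN0])
      (fun x i => by
        rw [abs_sub_comm, ← hexp]
        exact exp_sub_exp_le hδ.le (by rw [abs_sub_comm]; exact lip x i))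
      (fun x i => by
        rw [← hexp]
        exact exp_sub_exp_le hδ.le (lip x i))
    rw [le_div_iff₀ hm0, mul_comm]
    refine le_trans (mul_le_mul_of_nonneg_left ?_ hm0.le) hle
    refine le_trans (le_of_eq (Finset.sum_congr rfl fun x hx => ?_))
      (hs.sum_le_tsum F fun x _ => by positivity)
    have : latnorm (x - y) ≤ N :=
      Finset.single_le_sum (f := fun x => latnorm (x - y)) (fun x _ => hlat _) hx
    simp only [min_eq_left this]
  exact ⟨summable_of_sum_le hnn key, (summable_of_sum_le hnn key).tsum_le_of_sum_le key⟩
end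
end StochHom
end

section
/- Let ⟨·⟩ be a stationary ensemble on Ω and let ξ ∈ ℝ^d, T > 0, 1 ≤ p < ∞. Then ⟨(Σ_{x∈ℤ^d} |∇∇G_T(a;0,x)|² |∇φ_T(a;x) + ξ|²)^p⟩ ≤ λ^{−2p} ⟨|∇φ_T(a;0) + ξ|^{2p}⟩, where ∇∇G_T(a;0,x) denotes the mixed second derivative of the Green's function measured in the spectral norm on ℝ^{d×d}. -/
/-!
Write `H(a,x)` for the squared Frobenius norm of `∇∇G(a;0,x)` and `F(a,x) = |∇φ(a;x) + ξ|²`. The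
squared spectral norm is at most `H`, so it suffices to bound `⟨(∑ₓ H F)^p⟩`.

*Quenched energy bound* (`mixed_energy`). For every field `a`, the sum over `x` of the squared
Frobenius norm of `∇∇G(a;x,0)` is at most `λ⁻²`. The usual energy estimate for each of the `d`
dipoles `u_k = G(a;·,e_k) - G(a;·,0)` would lose a factor `d`. Instead `u_k` is compared with the
dipole `w_k` of the identity field, which is admissible because `λ ≤ 1`: testing the equation of
`w_k` with `u_k` gives `∑|∇u_k|² ≤ λ⁻² (w_k(e_k) - w_k(0))` (`dipole_energy`), and by translation
invariance the sum over `k` of the brackets is `∇*∇g(0) = 1 - g(0)/T ≤ 1`, `g` being the Green's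
function of the identity field. Since `G(a;x,y) = G(aᵀ;y,x)` (`green_transpose`), the bound also
holds for the sum over the second variable, i.e. `∑ₓ H(a,x) ≤ λ⁻²`.

*Annealed bound.* Jensen's inequality (`tsum_jensen`) gives
`(∑ₓ H F)^p ≤ λ^(-2(p-1)) ∑ₓ H F^p`. By uniqueness, `G` and `φ` are covariant under shifts, so
stationarity turns `⟨H(a,x) F(a,x)^p⟩` into the expectation of `|∇∇G(a;-x,0)|² F(a,0)^p`, and the
energy bound in the first variable supplies the last factor `λ⁻²`.

Uniqueness of bounded solutions without a maximum principle (`a` need not be symmetric or diagonal)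
and a bound uniform in `a` come from an energy estimate with an exponential weight of small
logarithmic gradient (`bounded_solution`). Together with compactness they imply that `G` and `φ`
depend continuously on `a` (`continuous_solution`), which provides the measurability and
integrability needed for the expectations.
-/

open MeasureTheory
open scoped ENNReal

namespace StochHom

noncomputable section


/-! ### Elliptic matrices -/

lemma IsElliptic.sum_sq_le {d : ℕ} {lam : ℝ} {A : Fin d → Fin d → ℝ} (hA : IsElliptic d lam A)
    (v : Fin d → ℝ) : ∑ i, (mulVec' A v i) ^ 2 ≤ ∑ i, (v i) ^ 2 := by
  have h := hA.2 v
  unfold vnorm at h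
  exact (Real.sqrt_le_sqrt_iff (Finset.sum_nonneg fun i _ => sq_nonneg _)).1 h

lemma isElliptic_id (d : ℕ) {lam : ℝ} (hlam1 : lam ≤ 1) :
    IsElliptic d lam (fun i j => if i = j then 1 else 0) := by
  have h : ∀ v : Fin d → ℝ, mulVec' (fun i j => if i = j then (1 : ℝ) else 0) v = v := by
    intro v; funext i; simp [mulVec']
  refine ⟨fun v => ?_, fun v => by rw [h]⟩
  rw [h]
  have h1 : ∑ i, v i * v i = ∑ i, (v i) ^ 2 := Finset.sum_congr rfl fun i _ => by ring
  rw [h1]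
  have h2 : 0 ≤ ∑ i, (v i) ^ 2 := Finset.sum_nonneg fun i _ => sq_nonneg _
  nlinarith

lemma sum_mulVec'_transpose {d : ℕ} (A : Fin d → Fin d → ℝ) (v w : Fin d → ℝ) :
    ∑ i, v i * mulVec' (fun i j => A j i) w i = ∑ i, w i * mulVec' A v i := by
  simp only [mulVec', Finset.mul_sum]
  rw [Finset.sum_comm]
  exact Finset.sum_congr rfl fun i _ => Finset.sum_congr rfl fun j _ => by ring

lemma IsElliptic.transpose {d : ℕ} {lam : ℝ} {A : Fin d → Fin d → ℝ} (hA : IsElliptic d lam A) :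
    IsElliptic d lam (fun i j => A j i) := by
  refine ⟨fun v => by rw [sum_mulVec'_transpose]; exact hA.1 v, fun v => ?_⟩
  set w := mulVec' (fun i j => A j i) v with hw
  -- `|Aᵀv|² = v · A Aᵀ v ≤ |v| |Aᵀ v|`
  have h1 : ∑ i, (w i) ^ 2 = ∑ i, v i * mulVec' A w i := by
    rw [← sum_mulVec'_transpose A w v, ← hw]
    exact Finset.sum_congr rfl fun i _ => by ring
  have h2 := Finset.sum_mul_sq_le_sq_mul_sq Finset.univ v (mulVec' A w)
  have h3 := hA.sum_sq_le w
  have h4 : 0 ≤ ∑ i, (w i) ^ 2 := Finset.sum_nonneg fun i _ => sq_nonneg _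
  have h5 : 0 ≤ ∑ i, (v i) ^ 2 := Finset.sum_nonneg fun i _ => sq_nonneg _
  rw [← h1] at h2
  unfold vnorm
  apply Real.sqrt_le_sqrt
  by_contra hlt
  push Not at hlt
  have : (∑ i, (v i) ^ 2) * ∑ i, (mulVec' A w i) ^ 2 ≤ (∑ i, (v i) ^ 2) * ∑ i, (w i) ^ 2 :=
    mul_le_mul_of_nonneg_left h3 h5
  nlinarith

/-- The pointwise transposed coefficient field. -/
def transp {d : ℕ} {lam : ℝ} (a : Coeff d lam) : Coeff d lam :=
  ⟨fun x i j => a.1 x j i, fun x => (a.2 x).transpose⟩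

/-- The constant coefficient field `Id`, admissible because `λ ≤ 1`. -/
def idCoeff (d : ℕ) {lam : ℝ} (hlam1 : lam ≤ 1) : Coeff d lam :=
  ⟨fun _ i j => if i = j then 1 else 0, fun _ => isElliptic_id d hlam1⟩

/-! ### The operator `1/T + ∇*a∇` and summation by parts -/

/-- The massive elliptic operator `u ↦ (1/T) u + ∇*(a∇u)`. -/
def Lop {d : ℕ} (T : ℝ) (a : Lat d → Fin d → Fin d → ℝ) (u : Lat d → ℝ) (x : Lat d) : ℝ :=
  (1 / T) * u x + ddiv (fun z => mulVec' (a z) (dgrad u z)) x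

lemma Lop_sub {d : ℕ} (T : ℝ) (a : Lat d → Fin d → Fin d → ℝ) (u v : Lat d → ℝ) (x : Lat d) :
    Lop T a (fun y => u y - v y) x = Lop T a u x - Lop T a v x := by
  have h : ∀ z i, mulVec' (a z) (dgrad (fun y => u y - v y) z) i
      = mulVec' (a z) (dgrad u z) i - mulVec' (a z) (dgrad v z) i := by
    intro z i
    simp only [mulVec', dgrad]
    rw [← Finset.sum_sub_distrib]
    exact Finset.sum_congr rfl fun j _ => by ring
  simp only [Lop, ddiv, h]
  have : ∀ i, (mulVec' (a (x - unitv d i)) (dgrad u (x - unitv d i)) i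
      - mulVec' (a (x - unitv d i)) (dgrad v (x - unitv d i)) i
      - (mulVec' (a x) (dgrad u x) i - mulVec' (a x) (dgrad v x) i))
      = (mulVec' (a (x - unitv d i)) (dgrad u (x - unitv d i)) i - mulVec' (a x) (dgrad u x) i)
      - (mulVec' (a (x - unitv d i)) (dgrad v (x - unitv d i)) i - mulVec' (a x) (dgrad v x) i) :=
    fun i => by ring
  simp only [this, Finset.sum_sub_distrib]
  ring

lemma Lop_shift {d : ℕ} (T : ℝ) (a : Lat d → Fin d → Fin d → ℝ) (u : Lat d → ℝ) (z x : Lat d) :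
    Lop T (fun y => a (y + z)) (fun y => u (y + z)) x = Lop T a u (x + z) := by
  have h1 : ∀ i, x - unitv d i + z = x + z - unitv d i := fun i => by abel
  have h2 : ∀ y, dgrad (fun y => u (y + z)) y = dgrad u (y + z) := fun y => by
    funext i
    simp only [dgrad, add_right_comm]
  simp only [Lop, ddiv, h1, h2]

lemma summable_shift {d : ℕ} {f : Lat d → ℝ} (hf : Summable f) (z : Lat d) :
    Summable fun x => f (x + z) :=
  (Equiv.addRight z).summable_iff.2 hf

lemma tsum_shift {d : ℕ} (f : Lat d → ℝ) (z : Lat d) : ∑' x, f (x + z) = ∑' x, f x :=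
  (Equiv.addRight z).tsum_eq f

lemma summable_reflect {d : ℕ} {f : Lat d → ℝ} (hf : Summable f) : Summable fun x => f (-x) :=
  (Equiv.neg (Lat d)).summable_iff.2 hf

lemma tsum_reflect {d : ℕ} (f : Lat d → ℝ) : ∑' x, f (-x) = ∑' x, f x :=
  (Equiv.neg (Lat d)).tsum_eq f

lemma sum_by_parts {d : ℕ} (u : Lat d → ℝ) (g : Lat d → Fin d → ℝ)
    (h : ∀ i, Summable fun x => u (x + unitv d i) * g x i) :
    HasSum (fun x => u x * ddiv g x - ∑ i, dgrad u x i * g x i) 0 := by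
  have key : ∀ i, HasSum (fun x => u x * g (x - unitv d i) i - u (x + unitv d i) * g x i) 0 := by
    intro i
    have h1 := (h i).hasSum
    have h2 := (Equiv.subRight (unitv d i)).hasSum_iff.2 h1
    have h3 := h2.sub h1
    simpa using h3
  have h4 := hasSum_sum (s := Finset.univ) fun i _ => key i
  simp only [Finset.sum_const_zero] at h4
  convert h4 using 2 with x
  simp only [ddiv, dgrad, Finset.mul_sum]
  rw [← Finset.sum_sub_distrib]
  exact Finset.sum_congr rfl fun i _ => by ring

/-! ### Bounded solutions: weighted energy estimate -/

/-- The `ℓ¹` length of a lattice point, as a natural number. -/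
def len {d : ℕ} (x : Lat d) : ℕ := ∑ i, (x i).natAbs

lemma len_add_unitv {d : ℕ} (x : Lat d) (i : Fin d) :
    len (x + unitv d i) = len x + 1 ∨ len x = len (x + unitv d i) + 1 := by
  have h1 : len (x + unitv d i)
      = (x i + 1).natAbs + ∑ j ∈ Finset.univ.erase i, (x j).natAbs := by
    rw [len, ← Finset.add_sum_erase _ _ (Finset.mem_univ i)]
    congr 1
    · simp [unitv]
    · refine Finset.sum_congr rfl fun j hj => ?_
      simp [unitv, Finset.ne_of_mem_erase hj]
  have h2 : len x = (x i).natAbs + ∑ j ∈ Finset.univ.erase i, (x j).natAbs := by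
    rw [len, ← Finset.add_sum_erase _ _ (Finset.mem_univ i)]
  omega

lemma summable_pow_len (d : ℕ) {r : ℝ} (h0 : 0 < r) (h1 : r < 1) :
    Summable fun x : Lat d => r ^ len x := by
  induction d with
  | zero => exact Summable.of_finite
  | succ n ih =>
    have hz : Summable fun k : ℤ => r ^ k.natAbs := by
      apply Summable.of_nat_of_neg <;> simpa using summable_geometric_of_lt_one h0.le h1
    have h := hz.mul_of_nonneg ih (fun _ => by positivity) (fun _ => by positivity)
    rw [← (Fin.consEquiv fun _ : Fin (n + 1) => ℤ).summable_iff]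
    convert h using 2 with x
    simp [Fin.consEquiv, len, Fin.sum_univ_succ, pow_add]

lemma pow_len_grad {d : ℕ} {r ε : ℝ} (hε : (1 - r) ^ 2 ≤ ε ^ 2 * r)
    (x : Lat d) (i : Fin d) :
    (r ^ len (x + unitv d i) - r ^ len x) ^ 2
      ≤ ε ^ 2 * (r ^ len x * r ^ len (x + unitv d i)) := by
  rcases len_add_unitv x i with h | h
  · rw [h, pow_succ r]
    have : 0 ≤ (r ^ len x) ^ 2 := sq_nonneg _
    nlinarith [mul_le_mul_of_nonneg_left hε this]
  · rw [h, pow_succ r]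
    have : 0 ≤ (r ^ len (x + unitv d i)) ^ 2 := sq_nonneg _
    nlinarith [mul_le_mul_of_nonneg_left hε this]

/-- Young's inequality for the commutator term of the weighted energy estimate. -/
lemma young_weight {ε w w' Dw p q : ℝ} (hε : 0 ≤ ε) (hw : 0 ≤ w) (hw' : 0 ≤ w')
    (hD : Dw ^ 2 ≤ ε ^ 2 * (w * w')) :
    -(ε / 2 * (w' * p ^ 2) + ε / 2 * (w * q ^ 2)) ≤ Dw * p * q := by
  have hB : 0 ≤ ε / 2 * (w' * p ^ 2) + ε / 2 * (w * q ^ 2) := by positivity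
  refine (abs_le_of_sq_le_sq' ?_ hB).1
  have h1 : (Dw * p * q) ^ 2 ≤ ε ^ 2 * (w * w') * (p * q) ^ 2 := by
    have := mul_le_mul_of_nonneg_right hD (sq_nonneg (p * q))
    nlinarith
  nlinarith [sq_nonneg (ε / 2 * (w' * p ^ 2) - ε / 2 * (w * q ^ 2))]

/-- The weighted energy estimate at the origin: testing the equation with `w ψ` for an
exponentially decaying weight `w` with a small logarithmic gradient. -/
lemma bounded_solution_at_zero (d : ℕ) {lam T : ℝ} (hlam : 0 < lam) (hT : 0 < T) :
    ∃ C : ℝ, 0 ≤ C ∧ ∀ (a : Coeff d lam) (ψ f : Lat d → ℝ) (K : ℝ),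
      (∃ M, ∀ x, |ψ x| ≤ M) → (∀ x, Lop T a.1 ψ x = f x) → (∀ x, |f x| ≤ K) →
      (ψ 0) ^ 2 ≤ C * K ^ 2 := by
  obtain ⟨ε, hε, hεl, hεd⟩ : ∃ ε : ℝ, 0 < ε ∧ ε ≤ lam ∧ ε * d ≤ 1 / (2 * T) := by
    refine ⟨min lam (1 / (2 * T * (d + 1))), by positivity, min_le_left _ _, ?_⟩
    calc min lam (1 / (2 * T * (d + 1))) * d ≤ 1 / (2 * T * (d + 1)) * (d + 1) := by
          gcongr
          · exact min_le_right _ _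
          · linarith
      _ = 1 / (2 * T) := by field_simp
  obtain ⟨r, hr0, hr1, hr⟩ : ∃ r : ℝ, 0 < r ∧ r < 1 ∧ (1 - r) ^ 2 ≤ ε ^ 2 * r := by
    refine ⟨1 / (1 + ε), by positivity, by rw [div_lt_one] <;> linarith, ?_⟩
    have : 1 - 1 / (1 + ε) = ε * (1 / (1 + ε)) := by field_simp; ring
    rw [this, mul_pow]
    gcongr
    rw [sq]
    refine mul_le_of_le_one_left (by positivity) ?_
    rw [div_le_one] <;> linarith
  set w : Lat d → ℝ := fun x => r ^ len x with hw
  have hwpos : ∀ x, 0 ≤ w x := fun x => by positivity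
  have hws : Summable w := summable_pow_len d hr0 hr1
  refine ⟨2 * T ^ 2 * ∑' x, w x, mul_nonneg (by positivity) (tsum_nonneg hwpos), ?_⟩
  rintro a ψ f K ⟨M, hM⟩ hL hf
  have hMψ : ∀ x, (ψ x) ^ 2 ≤ M ^ 2 := fun x => sq_le_sq' (abs_le.1 (hM x)).1 (abs_le.1 (hM x)).2
  have hM0 : 0 ≤ M := (abs_nonneg _).trans (hM 0)
  set h : Lat d → Fin d → ℝ := fun z => mulVec' (a.1 z) (dgrad ψ z) with hh
  have hgrad : ∀ x, ∑ i, (dgrad ψ x i) ^ 2 ≤ d * (2 * M) ^ 2 := by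
    intro x
    have : ∀ i ∈ Finset.univ, (dgrad ψ x i) ^ 2 ≤ (2 * M) ^ 2 := by
      intro i _
      have h1 := abs_le.1 (hM (x + unitv d i))
      have h2 := abs_le.1 (hM x)
      apply sq_le_sq' <;> simp only [dgrad] <;> linarith
    simpa using Finset.sum_le_sum this
  have hhb : ∀ x i, |h x i| ≤ Real.sqrt (d * (2 * M) ^ 2) := by
    intro x i
    apply Real.abs_le_sqrt
    exact (Finset.single_le_sum (f := fun i => (h x i) ^ 2) (fun i _ => sq_nonneg _)
      (Finset.mem_univ i)).trans (((a.2 x).sum_sq_le _).trans (hgrad x))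
  have hsum : ∀ i, Summable fun x => (fun y => w y * ψ y) (x + unitv d i) * h x i := by
    intro i
    refine Summable.of_norm_bounded
      ((summable_shift hws (unitv d i)).mul_right (M * Real.sqrt (d * (2 * M) ^ 2))) fun x => ?_
    rw [Real.norm_eq_abs, abs_mul, abs_mul, abs_of_nonneg (hwpos _), mul_assoc]
    gcongr
    · exact hM _
    · exact hhb x i
  have hparts := sum_by_parts (fun y => w y * ψ y) h hsum
  -- `S = Σ w ψ²`
  have hS : Summable fun x => w x * (ψ x) ^ 2 := by
    refine Summable.of_nonneg_of_le (fun x => mul_nonneg (hwpos x) (sq_nonneg _)) (fun x => ?_)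
      (hws.mul_right (M ^ 2))
    exact mul_le_mul_of_nonneg_left (hMψ x) (hwpos x)
  have hSi : ∀ i, HasSum (fun x => w (x + unitv d i) * (ψ (x + unitv d i)) ^ 2)
      (∑' x, w x * (ψ x) ^ 2) := by
    intro i
    rw [← tsum_shift _ (unitv d i)]
    exact (summable_shift hS (unitv d i)).hasSum
  have hup := ((hws.hasSum.mul_left (T * K ^ 2)).add (hS.hasSum.mul_left (-(3 / (4 * T))))).add
    ((hasSum_sum (s := Finset.univ) fun i _ => hSi i).mul_left (ε / 2))
  have hle : ∀ x, w x * ψ x * ddiv h x - ∑ i, dgrad (fun y => w y * ψ y) x i * h x i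
      ≤ T * K ^ 2 * w x + -(3 / (4 * T)) * (w x * (ψ x) ^ 2)
        + ε / 2 * ∑ i, w (x + unitv d i) * (ψ (x + unitv d i)) ^ 2 := by
    intro x
    have e1 : ddiv h x = f x - (1 / T) * ψ x := by
      have := hL x
      simp only [Lop] at this
      linarith
    have e2 : ∑ i, dgrad (fun y => w y * ψ y) x i * h x i
        = w x * ∑ i, dgrad ψ x i * h x i
          + ∑ i, (w (x + unitv d i) - w x) * ψ (x + unitv d i) * h x i := by
      rw [Finset.mul_sum, ← Finset.sum_add_distrib]
      exact Finset.sum_congr rfl fun i _ => by simp only [dgrad]; ring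
    have e3 := mul_le_mul_of_nonneg_left ((a.2 x).1 (dgrad ψ x)) (hwpos x)
    have e4 : -(ε / 2 * ∑ i, w (x + unitv d i) * (ψ (x + unitv d i)) ^ 2
          + ε / 2 * (w x * ∑ i, (h x i) ^ 2))
        ≤ ∑ i, (w (x + unitv d i) - w x) * ψ (x + unitv d i) * h x i := by
      simp only [Finset.mul_sum]
      rw [← Finset.sum_add_distrib, ← Finset.sum_neg_distrib]
      exact Finset.sum_le_sum fun i _ =>
        young_weight hε.le (hwpos _) (hwpos _) (pow_len_grad hr x i)
    have e5 : w x * ∑ i, (h x i) ^ 2 ≤ w x * ∑ i, (dgrad ψ x i) ^ 2 :=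
      mul_le_mul_of_nonneg_left ((a.2 x).sum_sq_le _) (hwpos x)
    have e6 : 0 ≤ w x * ∑ i, (dgrad ψ x i) ^ 2 :=
      mul_nonneg (hwpos x) (Finset.sum_nonneg fun i _ => sq_nonneg _)
    have e7 : ψ x * f x ≤ 1 / (4 * T) * (ψ x) ^ 2 + T * K ^ 2 := by
      have hfK : (f x) ^ 2 ≤ K ^ 2 := sq_le_sq' (abs_le.1 (hf x)).1 (abs_le.1 (hf x)).2
      have : 0 ≤ T * (f x - 1 / (2 * T) * ψ x) ^ 2 := by positivity
      have e : T * (f x - 1 / (2 * T) * ψ x) ^ 2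
          = T * (f x) ^ 2 - ψ x * f x + 1 / (4 * T) * (ψ x) ^ 2 := by
        field_simp; ring
      nlinarith
    have e8 := mul_le_mul_of_nonneg_left e7 (hwpos x)
    rw [e1, e2]
    have e9 : w x * ψ x * (f x - 1 / T * ψ x) = w x * (ψ x * f x) - 1 / T * (w x * (ψ x) ^ 2) := by
      ring
    have e10 : w x * (1 / (4 * T) * (ψ x) ^ 2 + T * K ^ 2) - 1 / T * (w x * (ψ x) ^ 2)
        = T * K ^ 2 * w x + -(3 / (4 * T)) * (w x * (ψ x) ^ 2) := by
      field_simp; ring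
    rw [e9]
    have e11 : ε / 2 * (w x * ∑ i, (h x i) ^ 2) ≤ w x * (lam * ∑ i, (dgrad ψ x i) ^ 2) := by
      have : ε / 2 * (w x * ∑ i, (h x i) ^ 2) ≤ ε / 2 * (w x * ∑ i, (dgrad ψ x i) ^ 2) := by
        gcongr
      nlinarith
    linarith
  have hfin := hasSum_le hle hparts hup
  simp only [Finset.sum_const, Finset.card_univ, Fintype.card_fin, nsmul_eq_mul] at hfin
  set S := ∑' x, w x * (ψ x) ^ 2 with hSdef
  have hS0 : (ψ 0) ^ 2 ≤ S := by
    have := hS.le_tsum 0 fun x _ => mul_nonneg (hwpos x) (sq_nonneg _)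
    have h0 : w 0 = 1 := by simp [hw, len]
    rwa [h0, one_mul] at this
  have hS1 : 0 ≤ S := (sq_nonneg _).trans hS0
  have h12 : ε / 2 * (d * S) ≤ 1 / (4 * T) * S := by
    have := mul_le_mul_of_nonneg_right hεd hS1
    have e : 1 / (4 * T) * S = 1 / 2 * (1 / (2 * T) * S) := by field_simp; ring
    rw [e]; linarith
  have h13 : 1 / (2 * T) * S ≤ T * K ^ 2 * ∑' x, w x := by
    have e : 3 / (4 * T) * S = 1 / (2 * T) * S + 1 / (4 * T) * S := by field_simp; ring
    linarith
  have h14 : S ≤ 2 * T * (T * K ^ 2 * ∑' x, w x) := by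
    have := mul_le_mul_of_nonneg_left h13 (by positivity : (0 : ℝ) ≤ 2 * T)
    have e : 2 * T * (1 / (2 * T) * S) = S := by field_simp
    linarith
  calc (ψ 0) ^ 2 ≤ S := hS0
    _ ≤ _ := h14
    _ = _ := by ring

/-- The solution operator of `1/T + ∇*a∇` is bounded on `ℓ^∞`, uniformly in `a`. -/
lemma bounded_solution (d : ℕ) {lam T : ℝ} (hlam : 0 < lam) (hT : 0 < T) :
    ∃ C : ℝ, 0 ≤ C ∧ ∀ (a : Coeff d lam) (ψ f : Lat d → ℝ) (K : ℝ),
      (∃ M, ∀ x, |ψ x| ≤ M) → (∀ x, Lop T a.1 ψ x = f x) → (∀ x, |f x| ≤ K) →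
      ∀ x, (ψ x) ^ 2 ≤ C * K ^ 2 := by
  obtain ⟨C, hC, h⟩ := bounded_solution_at_zero d hlam hT
  refine ⟨C, hC, fun a ψ f K ⟨M, hM⟩ hL hf x => ?_⟩
  have := h (shift x a) (fun y => ψ (y + x)) (fun y => f (y + x)) K ⟨M, fun y => hM _⟩
    (fun y => by rw [← hL (y + x)]; exact Lop_shift T a.1 ψ x y) (fun y => hf _)
  simpa using this

lemma bounded_unique {d : ℕ} {lam T : ℝ} (hlam : 0 < lam) (hT : 0 < T) (a : Coeff d lam)
    {u v : Lat d → ℝ} (hu : ∃ M, ∀ x, |u x| ≤ M) (hv : ∃ M, ∀ x, |v x| ≤ M)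
    (h : ∀ x, Lop T a.1 u x = Lop T a.1 v x) : u = v := by
  obtain ⟨C, -, hC⟩ := bounded_solution d hlam hT
  obtain ⟨M, hM⟩ := hu
  obtain ⟨N, hN⟩ := hv
  funext x
  have := hC a (fun y => u y - v y) (fun _ => 0) 0
    ⟨M + N, fun y => (abs_sub _ _).trans (add_le_add (hM y) (hN y))⟩
    (fun y => by rw [Lop_sub, h y, sub_self]) (fun y => by simp) x
  have h0 : (u x - v x) ^ 2 = 0 := le_antisymm (by simpa using this) (sq_nonneg _)
  exact sub_eq_zero.1 (pow_eq_zero_iff (two_ne_zero) |>.1 h0)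

/-- Continuous dependence on the coefficient field: since solutions take values in a compact
product of intervals and are unique, closedness of the equation gives continuity. -/
lemma continuous_solution {d : ℕ} {lam T : ℝ} (hlam : 0 < lam) (hT : 0 < T)
    (F : Coeff d lam → Lat d → ℝ) (hF : ∀ x, Continuous fun a => F a x)
    (u : Coeff d lam → Lat d → ℝ) (M : ℝ) (hM : ∀ a x, |u a x| ≤ M)
    (hu : ∀ a x, Lop T a.1 (u a) x = F a x) (x : Lat d) : Continuous fun a => u a x := by
  suffices h : Continuous u from (continuous_apply x).comp h
  have hcomp : IsCompact (Set.pi Set.univ fun _ : Lat d => Set.Icc (-M) M) :=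
    isCompact_univ_pi fun _ => isCompact_Icc
  rw [continuous_iff_ultrafilter]
  intro a g hg
  obtain ⟨ψ, hψ, hlim⟩ := isCompact_iff_ultrafilter_le_nhds.1 hcomp (g.map u) (by
    rw [Filter.le_principal_iff, Ultrafilter.mem_coe, Ultrafilter.mem_map]
    exact Filter.univ_mem' fun b y _ => abs_le.1 (hM b y))
  have hlim' : Filter.Tendsto u g (nhds ψ) := hlim
  have hψu : ψ = u a := by
    refine bounded_unique hlam hT a ⟨M, fun y => abs_le.2 (hψ y (Set.mem_univ y))⟩
      ⟨M, hM a⟩ fun y => ?_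
    rw [hu]
    have hcont : Continuous fun q : Coeff d lam × (Lat d → ℝ) => Lop T q.1.1 q.2 y := by
      have hu : ∀ z, Continuous fun q : Coeff d lam × (Lat d → ℝ) => q.2 z := fun z =>
        (continuous_apply z).comp continuous_snd
      have ha : ∀ z i j, Continuous fun q : Coeff d lam × (Lat d → ℝ) => q.1.1 z i j :=
        fun z i j => (continuous_apply_apply i j).comp
          ((continuous_apply z).comp (continuous_subtype_val.comp continuous_fst))
      have hm : ∀ z i, Continuous fun q : Coeff d lam × (Lat d → ℝ) =>
          mulVec' (q.1.1 z) (dgrad q.2 z) i := fun z i =>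
        continuous_finsetSum _ fun j _ => (ha z i j).mul ((hu _).sub (hu _))
      exact (continuous_const.mul (hu y)).add
        (continuous_finsetSum _ fun i _ => (hm _ i).sub (hm _ i))
    have h1 : Filter.Tendsto (fun b => Lop T b.1 (u b) y) g (nhds (Lop T a.1 ψ y)) :=
      (hcont.tendsto (a, ψ)).comp ((Filter.tendsto_id'.2 hg).prodMk_nhds hlim')
    have h2 : Filter.Tendsto (fun b => Lop T b.1 (u b) y) g (nhds (F a y)) := by
      simp only [hu]
      exact ((hF y).tendsto a).comp (Filter.tendsto_id'.2 hg)
    exact tendsto_nhds_unique h1 h2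
  rw [← hψu]
  exact hlim'

/-! ### Square-summable solutions: energy identities and the Green's function -/

lemma summable_mul_of_sq_s13 {d : ℕ} {u v : Lat d → ℝ} (hu : Summable fun x => (u x) ^ 2)
    (hv : Summable fun x => (v x) ^ 2) : Summable fun x => u x * v x := by
  refine Summable.of_norm_bounded (hu.add hv) fun x => ?_
  rw [Real.norm_eq_abs, abs_le]
  constructor <;> nlinarith [sq_nonneg (u x + v x), sq_nonneg (u x - v x)]

lemma summable_sub_sq {d : ℕ} {u v : Lat d → ℝ} (hu : Summable fun x => (u x) ^ 2)
    (hv : Summable fun x => (v x) ^ 2) : Summable fun x => (u x - v x) ^ 2 := by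
  refine Summable.of_nonneg_of_le (fun x => sq_nonneg _) (fun x => ?_)
    ((hu.add hv).mul_left 2)
  nlinarith [sq_nonneg (u x + v x)]

lemma summable_dgrad_sq {d : ℕ} {u : Lat d → ℝ} (hu : Summable fun x => (u x) ^ 2) (i : Fin d) :
    Summable fun x => (dgrad u x i) ^ 2 :=
  summable_sub_sq (summable_shift hu (unitv d i)) hu

lemma summable_flux_sq {d : ℕ} {lam : ℝ} (a : Coeff d lam) {u : Lat d → ℝ}
    (hu : Summable fun x => (u x) ^ 2) (i : Fin d) :
    Summable fun x => (mulVec' (a.1 x) (dgrad u x) i) ^ 2 := by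
  refine Summable.of_nonneg_of_le (fun x => sq_nonneg _) (fun x => ?_)
    (summable_sum (s := Finset.univ) fun i _ => summable_dgrad_sq hu i)
  exact (Finset.single_le_sum (f := fun i => (mulVec' (a.1 x) (dgrad u x) i) ^ 2)
    (fun i _ => sq_nonneg _) (Finset.mem_univ i)).trans ((a.2 x).sum_sq_le _)

lemma bounded_of_summable_sq {d : ℕ} {u : Lat d → ℝ} (hu : Summable fun x => (u x) ^ 2) :
    ∃ M, ∀ x, |u x| ≤ M :=
  ⟨Real.sqrt (∑' x, (u x) ^ 2), fun x =>
    Real.abs_le_sqrt (hu.le_tsum x fun _ _ => sq_nonneg _)⟩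

/-- The weak formulation: `Σ v (1/T + ∇*a∇) u = Σ ((1/T) v u + ∇v · a∇u)` in `ℓ²`. -/
lemma pairing {d : ℕ} {lam : ℝ} (T : ℝ) (a : Coeff d lam) {u v : Lat d → ℝ}
    (hu : Summable fun x => (u x) ^ 2) (hv : Summable fun x => (v x) ^ 2) {s : ℝ}
    (hs : HasSum (fun x => v x * Lop T a.1 u x) s) :
    HasSum (fun x => (1 / T) * (v x * u x)
      + ∑ i, dgrad v x i * mulVec' (a.1 x) (dgrad u x) i) s := by
  have h := sum_by_parts v (fun z => mulVec' (a.1 z) (dgrad u z)) fun i =>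
    summable_mul_of_sq_s13 (summable_shift hv (unitv d i)) (summable_flux_sq a hu i)
  have h2 := hs.sub h
  rw [sub_zero] at h2
  refine h2.congr_fun fun x => ?_
  simp only [Lop]
  ring

lemma hasSum_mul_delta {d : ℕ} (v : Lat d → ℝ) (y : Lat d) :
    HasSum (fun x => v x * if x = y then (1 : ℝ) else 0) (v y) := by
  have := hasSum_ite_eq y (v y)
  convert this using 2 with x
  split_ifs with h <;> simp [h]

lemma green_pairing {d : ℕ} {lam T : ℝ} (a : Coeff d lam) {y : Lat d} {u v : Lat d → ℝ}
    (hu : IsGreen d T a.1 y u) (hv : Summable fun x => (v x) ^ 2) :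
    HasSum (fun x => (1 / T) * (v x * u x)
      + ∑ i, dgrad v x i * mulVec' (a.1 x) (dgrad u x) i) (v y) := by
  apply pairing T a hu.1 hv
  have h : ∀ x, Lop T a.1 u x = if x = y then 1 else 0 := hu.2
  simp only [h]
  exact hasSum_mul_delta v y

/-- The transposed Green's function: `G(a;x,y) = G(aᵀ;y,x)`. -/
lemma green_transpose {d : ℕ} {lam T : ℝ} (a : Coeff d lam) {x y : Lat d} {u v : Lat d → ℝ}
    (hu : IsGreen d T a.1 y u) (hv : IsGreen d T (transp a).1 x v) : u x = v y := by
  have h1 := green_pairing a hu hv.1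
  have h2 := green_pairing (transp a) hv hu.1
  refine h2.unique ?_
  convert h1 using 2 with z
  rw [mul_comm (u z)]
  congr 1
  exact sum_mulVec'_transpose (a.1 z) (dgrad u z) (dgrad v z)

lemma green_unique {d : ℕ} {lam T : ℝ} (hlam : 0 < lam) (hT : 0 < T) (a : Coeff d lam)
    {y : Lat d} {u v : Lat d → ℝ} (hu : IsGreen d T a.1 y u) (hv : IsGreen d T a.1 y v) :
    u = v :=
  bounded_unique hlam hT a (bounded_of_summable_sq hu.1) (bounded_of_summable_sq hv.1)
    fun x => (hu.2 x).trans (hv.2 x).symm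

lemma green_shift {d : ℕ} {lam T : ℝ} (hlam : 0 < lam) (hT : 0 < T)
    {G : Coeff d lam → Lat d → Lat d → ℝ}
    (hG : ∀ (a : Coeff d lam) (y : Lat d), IsGreen d T a.1 y (fun x => G a x y))
    (a : Coeff d lam) (x y z : Lat d) : G (shift z a) x y = G a (x + z) (y + z) := by
  have h : IsGreen d T (shift z a).1 y (fun x => G a (x + z) (y + z)) := by
    refine ⟨summable_shift (hG a (y + z)).1 z, fun x => ?_⟩
    have := (Lop_shift T a.1 (fun x => G a x (y + z)) z x).trans ((hG a (y + z)).2 (x + z))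
    simp only [add_left_inj] at this
    exact this
  exact congrFun (green_unique hlam hT (shift z a) (hG _ y) h) x

lemma green_diag_nonneg {d : ℕ} {lam T : ℝ} (hlam : 0 < lam) (hT : 0 < T) (a : Coeff d lam)
    {y : Lat d} {u : Lat d → ℝ} (hu : IsGreen d T a.1 y u) : 0 ≤ u y := by
  refine (green_pairing a hu hu.1).nonneg fun x => ?_
  have h1 := (a.2 x).1 (dgrad u x)
  have h2 : 0 ≤ lam * ∑ i, (dgrad u x i) ^ 2 :=
    mul_nonneg hlam.le (Finset.sum_nonneg fun i _ => sq_nonneg _)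
  have h3 : 0 ≤ 1 / T * (u x * u x) := mul_nonneg (by positivity) (mul_self_nonneg _)
  exact add_nonneg h3 (h2.trans h1)

/-- Comparison of the dipole `U = G(a;·,y) - G(a;·,y')` with its analogue `W` for the identity
field: testing the equation of `W` with `U` and absorbing the energy of `U` bounds `Σ|∇U|²` by
`λ⁻² (W(y) - W(y'))`, where `W(y) - W(y')` is the energy of `W`. -/
lemma dipole_energy {d : ℕ} {lam T : ℝ} (hlam : 0 < lam) (hlam1 : lam ≤ 1) (hT : 0 < T)
    (a : Coeff d lam) {y y' : Lat d} {u u' w w' : Lat d → ℝ}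
    (hu : IsGreen d T a.1 y u) (hu' : IsGreen d T a.1 y' u')
    (hw : IsGreen d T (idCoeff d hlam1).1 y w) (hw' : IsGreen d T (idCoeff d hlam1).1 y' w') :
    (Summable fun x => ∑ i, (dgrad (fun x => u x - u' x) x i) ^ 2) ∧
    ∑' x, ∑ i, (dgrad (fun x => u x - u' x) x i) ^ 2
      ≤ (lam ^ 2)⁻¹ * ((w y - w' y) - (w y' - w' y')) := by
  set U : Lat d → ℝ := fun x => u x - u' x with hU
  set W : Lat d → ℝ := fun x => w x - w' x with hW
  have hUs : Summable fun x => (U x) ^ 2 := summable_sub_sq hu.1 hu'.1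
  have hWs : Summable fun x => (W x) ^ 2 := summable_sub_sq hw.1 hw'.1
  have hLU : ∀ x, Lop T a.1 U x = (if x = y then 1 else 0) - (if x = y' then 1 else 0) := fun x =>
    (Lop_sub T a.1 u u' x).trans (congrArg₂ (· - ·) (hu.2 x) (hu'.2 x))
  have hLW : ∀ x, Lop T (idCoeff d hlam1).1 W x
      = (if x = y then 1 else 0) - (if x = y' then 1 else 0) := fun x =>
    (Lop_sub T _ w w' x).trans (congrArg₂ (· - ·) (hw.2 x) (hw'.2 x))
  have hsrc : ∀ v : Lat d → ℝ,
      HasSum (fun x => v x * ((if x = y then (1 : ℝ) else 0) - (if x = y' then 1 else 0)))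
        (v y - v y') := fun v => by
    have := (hasSum_mul_delta v y).sub (hasSum_mul_delta v y')
    simpa only [mul_sub] using this
  have hid : ∀ v : Fin d → ℝ, ∀ x, mulVec' ((idCoeff d hlam1 : Coeff d lam).1 x) v = v := by
    intro v x; funext i; simp [mulVec', idCoeff]
  have p1 := pairing T a hUs hUs (s := U y - U y') (by simp only [hLU]; exact hsrc U)
  have p2 := pairing T (idCoeff d hlam1) hWs hUs (s := U y - U y')
    (by simp only [hLW]; exact hsrc U)
  have p3 := pairing T (idCoeff d hlam1) hWs hWs (s := W y - W y')
    (by simp only [hLW]; exact hsrc W)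
  simp only [hid] at p2 p3
  have hgs : Summable fun x => ∑ i, (dgrad U x i) ^ 2 :=
    summable_sum fun i _ => summable_dgrad_sq hUs i
  refine ⟨hgs, ?_⟩
  -- Young's inequality bounds the constant coefficient form of `(U, W)` by the energies of `U`
  -- and `W`; `λ ≤ 1` lets the ellipticity of `a` control the massive term as well.
  have key1 : U y - U y' ≤ (1 / 2) * (U y - U y') + (1 / (2 * lam)) * (W y - W y') := by
    refine hasSum_le (fun x => ?_) p2 ((p1.mul_left (1 / 2)).add (p3.mul_left (1 / (2 * lam))))
    have young : ∀ s t : ℝ, s * t ≤ lam / 2 * (s * s) + 1 / (2 * lam) * (t * t) := by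
      intro s t
      have h : 0 ≤ 1 / (2 * lam) * (lam * s - t) ^ 2 := by positivity
      have e : 1 / (2 * lam) * (lam * s - t) ^ 2
          = lam / 2 * (s * s) + 1 / (2 * lam) * (t * t) - s * t := by field_simp; ring
      linarith
    have e1 : 1 / T * (U x * W x)
        ≤ 1 / 2 * (1 / T * (U x * U x)) + 1 / (2 * lam) * (1 / T * (W x * W x)) := by
      have h1 : 1 / T * (U x * W x)
          ≤ 1 / T * (lam / 2 * (U x * U x) + 1 / (2 * lam) * (W x * W x)) :=
        mul_le_mul_of_nonneg_left (young _ _) (by positivity)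
      have h2 : lam * (1 / T * (U x * U x)) ≤ 1 * (1 / T * (U x * U x)) :=
        mul_le_mul_of_nonneg_right hlam1 (mul_nonneg (by positivity) (mul_self_nonneg _))
      nlinarith
    have e2 : ∑ i, dgrad U x i * dgrad W x i
        ≤ lam / 2 * ∑ i, (dgrad U x i) ^ 2
          + 1 / (2 * lam) * ∑ i, dgrad W x i * dgrad W x i := by
      rw [Finset.mul_sum, Finset.mul_sum, ← Finset.sum_add_distrib]
      exact Finset.sum_le_sum fun i _ => by
        have := young (dgrad U x i) (dgrad W x i)
        rwa [← sq (dgrad U x i)] at this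
    have e3 := (a.2 x).1 (dgrad U x)
    nlinarith
  have key2 : lam * ∑' x, ∑ i, (dgrad U x i) ^ 2 ≤ U y - U y' := by
    refine hasSum_le (fun x => ?_) (hgs.hasSum.mul_left lam) p1
    have h3 : 0 ≤ 1 / T * (U x * U x) := mul_nonneg (by positivity) (mul_self_nonneg _)
    have := (a.2 x).1 (dgrad U x)
    linarith
  have key3 : lam * ∑' x, ∑ i, (dgrad U x i) ^ 2 ≤ 1 / lam * (W y - W y') := by
    have : 1 / lam * (W y - W y') = 2 * (1 / (2 * lam) * (W y - W y')) := by field_simp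
    linarith
  have key4 := mul_le_mul_of_nonneg_left key3 (by positivity : 0 ≤ 1 / lam)
  have e : 1 / lam * (lam * ∑' x, ∑ i, (dgrad U x i) ^ 2) = ∑' x, ∑ i, (dgrad U x i) ^ 2 := by
    field_simp
  have e' : 1 / lam * (1 / lam * (W y - W y')) = (lam ^ 2)⁻¹ * (W y - W y') := by
    field_simp
  rw [e, e'] at key4
  exact key4

/-- The Frobenius sum of the mixed second derivative over the first variable is at most `λ⁻²`,
without a dimensional factor: the constant coefficient energies `w_k(e_k) - w_k(0)` add up
over `k` to `∇*∇g(0) ≤ 1`, where `g` is the constant coefficient Green's function. -/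
lemma mixed_energy {d : ℕ} {lam T : ℝ} (hlam : 0 < lam) (hlam1 : lam ≤ 1) (hT : 0 < T)
    {G : Coeff d lam → Lat d → Lat d → ℝ}
    (hG : ∀ (a : Coeff d lam) (y : Lat d), IsGreen d T a.1 y (fun x => G a x y))
    (a : Coeff d lam) :
    (Summable fun x => ∑ k, ∑ i,
      (dgrad (fun z => G a z (unitv d k) - G a z 0) x i) ^ 2) ∧
    ∑' x, ∑ k, ∑ i, (dgrad (fun z => G a z (unitv d k) - G a z 0) x i) ^ 2 ≤ (lam ^ 2)⁻¹ := by
  set I : Coeff d lam := idCoeff d hlam1 with hI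
  have h := fun k => dipole_energy hlam hlam1 hT a (hG a (unitv d k)) (hG a 0)
    (hG I (unitv d k)) (hG I 0)
  refine ⟨summable_sum fun k _ => (h k).1, ?_⟩
  rw [Summable.tsum_finsetSum fun k _ => (h k).1]
  refine (Finset.sum_le_sum fun k _ => (h k).2).trans ?_
  rw [← Finset.mul_sum]
  refine mul_le_of_le_one_right (by positivity) ?_
  have hsh : ∀ z x y, G I x y = G I (x + z) (y + z) := fun z x y =>
    green_shift hlam hT hG I x y z
  have e1 : ∀ k, G I (unitv d k) (unitv d k) = G I 0 0 := fun k => by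
    have := hsh (unitv d k) 0 0
    simpa using this.symm
  have e2 : ∀ k, G I 0 (unitv d k) = G I (-unitv d k) 0 := fun k => by
    have := hsh (unitv d k) (-unitv d k) 0
    simpa using this.symm
  have hid : ∀ v : Fin d → ℝ, ∀ x, mulVec' (I.1 x) v = v := by
    intro v x; funext i; simp [mulVec', hI, idCoeff]
  have h0 := (hG I 0).2 0
  simp only [hid, ddiv, dgrad, if_true, zero_sub, neg_add_cancel, zero_add] at h0
  have h1 : 0 ≤ 1 / T * G I 0 0 :=
    mul_nonneg (by positivity) (green_diag_nonneg (u := fun x => G I x 0) hlam hT I (hG I 0))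
  have h2 : ∑ k, (G I (unitv d k) (unitv d k) - G I (unitv d k) 0
      - (G I 0 (unitv d k) - G I 0 0))
      = ∑ k, (G I 0 0 - G I (-unitv d k) 0 - (G I (unitv d k) 0 - G I 0 0)) :=
    Finset.sum_congr rfl fun k _ => by rw [e1, e2]; ring
  rw [h2]
  linarith

/-! ### Jensen's inequality and the spectral norm -/

/-- Jensen's inequality for a measure with weights `H` of total mass at most `Λ`, obtained by
integrating the tangent line of `t ↦ t ^ p` at `Λ⁻¹ ∑ H F`. -/
lemma tsum_jensen {ι : Type*} {H F : ι → ℝ} {B Λ p : ℝ} (hp : 1 ≤ p) (hΛ : 0 < Λ)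
    (hH : ∀ x, 0 ≤ H x) (hF : ∀ x, 0 ≤ F x) (hFB : ∀ x, F x ≤ B) (hs : Summable H)
    (hle : ∑' x, H x ≤ Λ) :
    (Summable fun x => H x * F x) ∧ (Summable fun x => H x * F x ^ p) ∧
    (∑' x, H x * F x) ^ p ≤ Λ ^ (p - 1) * ∑' x, H x * F x ^ p := by
  have hs1 : Summable fun x => H x * F x :=
    Summable.of_nonneg_of_le (fun x => mul_nonneg (hH x) (hF x))
      (fun x => mul_le_mul_of_nonneg_left (hFB x) (hH x)) (hs.mul_right B)
  have hs2 : Summable fun x => H x * F x ^ p :=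
    Summable.of_nonneg_of_le (fun x => mul_nonneg (hH x) (Real.rpow_nonneg (hF x) p))
      (fun x => mul_le_mul_of_nonneg_left
        (Real.rpow_le_rpow (hF x) (hFB x) (by linarith)) (hH x)) (hs.mul_right (B ^ p))
  refine ⟨hs1, hs2, ?_⟩
  have hnn : 0 ≤ ∑' x, H x * F x ^ p :=
    tsum_nonneg fun x => mul_nonneg (hH x) (Real.rpow_nonneg (hF x) p)
  obtain ⟨m, hm⟩ : ∃ m, ∑' x, H x * F x = Λ * m := ⟨(∑' x, H x * F x) / Λ, by field_simp⟩
  have hm0 : 0 ≤ m := by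
    have : 0 ≤ ∑' x, H x * F x := tsum_nonneg fun x => mul_nonneg (hH x) (hF x)
    rw [hm] at this
    exact nonneg_of_mul_nonneg_right this hΛ
  rcases hm0.eq_or_lt with h0 | hmpos
  · rw [hm, ← h0, mul_zero, Real.zero_rpow (by linarith)]
    exact mul_nonneg (Real.rpow_nonneg hΛ.le _) hnn
  have htan : ∀ x, m ^ p * (1 - p) * H x + m ^ p * (p / m) * (H x * F x) ≤ H x * F x ^ p := by
    intro x
    have hb := one_add_mul_self_le_rpow_one_add (s := F x / m - 1)
      (by have := div_nonneg (hF x) hm0; linarith) hp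
    have e : 1 + (F x / m - 1) = F x / m := by ring
    rw [e, Real.div_rpow (hF x) hm0, le_div_iff₀ (Real.rpow_pos_of_pos hmpos p)] at hb
    have := mul_le_mul_of_nonneg_left hb (hH x)
    refine le_trans (le_of_eq ?_) this
    ring
  have h1 := hasSum_le htan ((hs.hasSum.mul_left _).add (hs1.hasSum.mul_left _)) hs2.hasSum
  rw [hm] at h1
  have e1 : m ^ p * (p / m) * (Λ * m) = m ^ p * (p * Λ) := by field_simp
  rw [e1] at h1
  have hmp : 0 ≤ m ^ p := Real.rpow_nonneg hm0 p
  have h2 : m ^ p * Λ ≤ ∑' x, H x * F x ^ p := by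
    refine le_trans ?_ h1
    have : 0 ≤ m ^ p * ((p - 1) * (Λ - ∑' x, H x)) :=
      mul_nonneg hmp (mul_nonneg (by linarith) (by linarith))
    nlinarith
  rw [hm, Real.mul_rpow hΛ.le hm0]
  have e2 : Λ ^ p = Λ ^ (p - 1) * Λ := by
    rw [← Real.rpow_add_one hΛ.ne', sub_add_cancel]
  rw [e2, mul_assoc, mul_comm Λ]
  exact mul_le_mul_of_nonneg_left h2 (Real.rpow_nonneg hΛ.le _)

lemma specNorm_nonneg {d : ℕ} (A : Fin d → Fin d → ℝ) : 0 ≤ specNorm A := by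
  apply Real.sSup_nonneg
  rintro r ⟨v, -, rfl⟩
  exact Real.sqrt_nonneg _

lemma specNorm_sq_le {d : ℕ} (A : Fin d → Fin d → ℝ) :
    specNorm A ^ 2 ≤ ∑ i, ∑ k, (A i k) ^ 2 := by
  have hnn : 0 ≤ ∑ i, ∑ k, (A i k) ^ 2 :=
    Finset.sum_nonneg fun i _ => Finset.sum_nonneg fun k _ => sq_nonneg _
  rw [← Real.le_sqrt (specNorm_nonneg A) hnn]
  refine csSup_le ⟨vnorm (mulVec' A 0), 0, by simp [vnorm], rfl⟩ ?_
  rintro r ⟨v, hv, rfl⟩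
  apply Real.sqrt_le_sqrt
  have hv1 : ∑ i, (v i) ^ 2 ≤ 1 := by
    exact (Real.sqrt_le_one).1 hv
  refine Finset.sum_le_sum fun i _ => ?_
  refine (Finset.sum_mul_sq_le_sq_mul_sq Finset.univ (A i) v).trans ?_
  exact mul_le_of_le_one_right (Finset.sum_nonneg fun k _ => sq_nonneg _) hv1

/-! ### Stationarity and regularity of the corrector -/

lemma corrector_shift {d : ℕ} {lam T : ℝ} (hlam : 0 < lam) (hT : 0 < T) {ξ : Fin d → ℝ}
    {φ : Coeff d lam → Lat d → ℝ} (hφ : ∀ a : Coeff d lam, IsModCorrector d T ξ a.1 (φ a))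
    (a : Coeff d lam) (x z : Lat d) : φ (shift z a) x = φ a (x + z) := by
  obtain ⟨M, hM⟩ := (hφ a).1
  refine congrFun (bounded_unique hlam hT (shift z a) (v := fun y => φ a (y + z)) (hφ _).1
    ⟨M, fun y => hM _⟩ fun y => ?_) x
  have h1 : Lop T (shift z a).1 (φ (shift z a)) y
      = - ddiv (fun y => mulVec' ((shift z a).1 y) ξ) y := (hφ (shift z a)).2 y
  have h2 : Lop T a.1 (φ a) (y + z) = - ddiv (fun y => mulVec' (a.1 y) ξ) (y + z) :=
    (hφ a).2 (y + z)
  have h3 : Lop T (shift z a).1 (fun y => φ a (y + z)) y = Lop T a.1 (φ a) (y + z) :=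
    Lop_shift T a.1 (φ a) z y
  rw [h1, h3, h2]
  have h4 : ∀ i, y - unitv d i + z = y + z - unitv d i := fun i => by abel
  simp only [ddiv, shift, h4]

lemma corrector_bound {d : ℕ} {lam T : ℝ} (hlam : 0 < lam) (hT : 0 < T) {ξ : Fin d → ℝ}
    {φ : Coeff d lam → Lat d → ℝ} (hφ : ∀ a : Coeff d lam, IsModCorrector d T ξ a.1 (φ a)) :
    ∃ M, ∀ a x, |φ a x| ≤ M := by
  obtain ⟨C, -, hC⟩ := bounded_solution d hlam hT
  have hb : ∀ (a : Coeff d lam) y i, |mulVec' (a.1 y) ξ i| ≤ vnorm ξ := by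
    intro a y i
    apply Real.abs_le_sqrt
    exact (Finset.single_le_sum (f := fun i => (mulVec' (a.1 y) ξ i) ^ 2)
      (fun i _ => sq_nonneg _) (Finset.mem_univ i)).trans ((a.2 y).sum_sq_le ξ)
  refine ⟨Real.sqrt (C * (∑ _i : Fin d, 2 * vnorm ξ) ^ 2), fun a x => Real.abs_le_sqrt ?_⟩
  refine hC a (φ a) (fun x => - ddiv (fun y => mulVec' (a.1 y) ξ) x) _ (hφ a).1 (hφ a).2
    (fun y => ?_) x
  rw [abs_neg]
  refine (Finset.abs_sum_le_sum_abs _ _).trans (Finset.sum_le_sum fun i _ => ?_)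
  refine (abs_sub _ _).trans ?_
  linarith [hb a (y - unitv d i) i, hb a y i]

lemma corrector_continuous {d : ℕ} {lam T : ℝ} (hlam : 0 < lam) (hT : 0 < T) {ξ : Fin d → ℝ}
    {φ : Coeff d lam → Lat d → ℝ} (hφ : ∀ a : Coeff d lam, IsModCorrector d T ξ a.1 (φ a))
    (x : Lat d) : Continuous fun a => φ a x := by
  obtain ⟨M, hM⟩ := corrector_bound hlam hT hφ
  refine continuous_solution hlam hT (fun a x => - ddiv (fun y => mulVec' (a.1 y) ξ) x)
    (fun y => ?_) φ M hM (fun a => (hφ a).2) x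
  have ha : ∀ z i j, Continuous fun a : Coeff d lam => a.1 z i j :=
    fun z i j => (continuous_apply_apply i j).comp
      ((continuous_apply z).comp continuous_subtype_val)
  have hm : ∀ z i, Continuous fun a : Coeff d lam => mulVec' (a.1 z) ξ i := fun z i =>
    continuous_finsetSum _ fun j _ => (ha z i j).mul continuous_const
  exact (continuous_finsetSum _ fun i _ => (hm _ i).sub (hm _ i)).neg

lemma green_continuous {d : ℕ} {lam T : ℝ} (hlam : 0 < lam) (hT : 0 < T)
    {G : Coeff d lam → Lat d → Lat d → ℝ}
    (hG : ∀ (a : Coeff d lam) (y : Lat d), IsGreen d T a.1 y (fun x => G a x y))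
    (x y : Lat d) : Continuous fun a => G a x y := by
  obtain ⟨C, -, hC⟩ := bounded_solution d hlam hT
  refine continuous_solution hlam hT (fun _ x => if x = y then 1 else 0)
    (fun _ => continuous_const) (fun a x => G a x y) (Real.sqrt (C * 1 ^ 2))
    (fun a z => Real.abs_le_sqrt ?_) (fun a => (hG a y).2) x
  refine hC a (fun x => G a x y) (fun x => if x = y then 1 else 0) 1
    (bounded_of_summable_sq (hG a y).1) (hG a y).2 (fun z => ?_) z
  split_ifs <;> simp

/-! ### The annealed estimate -/

/-- The `(i,k)` entry of the mixed second derivative `∇∇G(a;0,x)`. -/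
def mixedEntry {d : ℕ} {lam : ℝ} (G : Coeff d lam → Lat d → Lat d → ℝ) (a : Coeff d lam)
    (x : Lat d) (i k : Fin d) : ℝ :=
  G a (unitv d i) (x + unitv d k) - G a (unitv d i) x - G a 0 (x + unitv d k) + G a 0 x

/-- The squared Frobenius norm of `∇∇G(a;0,x)`. -/
def frob {d : ℕ} {lam : ℝ} (G : Coeff d lam → Lat d → Lat d → ℝ) (a : Coeff d lam)
    (x : Lat d) : ℝ :=
  ∑ i, ∑ k, (mixedEntry G a x i k) ^ 2

/-- The squared Frobenius norm of `∇∇G(a;x,0)`. -/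
def frob' {d : ℕ} {lam : ℝ} (G : Coeff d lam → Lat d → Lat d → ℝ) (a : Coeff d lam)
    (x : Lat d) : ℝ :=
  ∑ k, ∑ i, (dgrad (fun z => G a z (unitv d k) - G a z 0) x i) ^ 2

/-- Summing over the second variable of the Green's function is summing over the first one for
the transposed field. -/
lemma frob_eq_transp {d : ℕ} {lam T : ℝ} {G : Coeff d lam → Lat d → Lat d → ℝ}
    (hG : ∀ (a : Coeff d lam) (y : Lat d), IsGreen d T a.1 y (fun x => G a x y))
    (a : Coeff d lam) (x : Lat d) : frob G a x = frob' G (transp a) x := by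
  have h : ∀ y z, G a y z = G (transp a) z y := fun y z =>
    green_transpose (u := fun x => G a x z) (v := fun x => G (transp a) x y) a
      (hG a z) (hG (transp a) y)
  refine Finset.sum_congr rfl fun i _ => Finset.sum_congr rfl fun k _ => ?_
  simp only [mixedEntry, dgrad, h]
  ring

lemma frob_eq_shift {d : ℕ} {lam T : ℝ} (hlam : 0 < lam) (hT : 0 < T)
    {G : Coeff d lam → Lat d → Lat d → ℝ}
    (hG : ∀ (a : Coeff d lam) (y : Lat d), IsGreen d T a.1 y (fun x => G a x y))
    (a : Coeff d lam) (x : Lat d) : frob G a x = frob' G (shift x a) (-x) := by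
  unfold frob frob'
  rw [Finset.sum_comm]
  refine Finset.sum_congr rfl fun k _ => Finset.sum_congr rfl fun i _ => ?_
  have e1 : -x + unitv d i + x = unitv d i := by abel
  have e2 : unitv d k + x = x + unitv d k := by abel
  simp only [mixedEntry, dgrad, green_shift hlam hT hG, e1, e2, neg_add_cancel, zero_add]
  ring

lemma frob'_energy {d : ℕ} {lam T : ℝ} (hlam : 0 < lam) (hlam1 : lam ≤ 1) (hT : 0 < T)
    {G : Coeff d lam → Lat d → Lat d → ℝ}
    (hG : ∀ (a : Coeff d lam) (y : Lat d), IsGreen d T a.1 y (fun x => G a x y))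
    (a : Coeff d lam) : Summable (frob' G a) ∧ ∑' x, frob' G a x ≤ (lam ^ 2)⁻¹ :=
  mixed_energy hlam hlam1 hT hG a

lemma frob'_neg_energy {d : ℕ} {lam T : ℝ} (hlam : 0 < lam) (hlam1 : lam ≤ 1) (hT : 0 < T)
    {G : Coeff d lam → Lat d → Lat d → ℝ}
    (hG : ∀ (a : Coeff d lam) (y : Lat d), IsGreen d T a.1 y (fun x => G a x y))
    (a : Coeff d lam) :
    (Summable fun x => frob' G a (-x)) ∧ ∑' x, frob' G a (-x) ≤ (lam ^ 2)⁻¹ := by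
  obtain ⟨hs, hle⟩ := frob'_energy hlam hlam1 hT hG a
  exact ⟨summable_reflect hs, (tsum_reflect (frob' G a)).trans_le hle⟩

/-- estimate (P1.17): the annealed bound involving the mixed second
derivative of the Green's function and the gradient of the corrector. -/
theorem statement13 (d : ℕ) (hd : 2 ≤ d) (lam : ℝ) (hlam0 : 0 < lam) (hlam1 : lam ≤ 1)
    (μ : Measure (Coeff d lam)) (hprob : IsProbabilityMeasure μ) (hstat : Stationary μ)
    (T : ℝ) (hT : 0 < T) (ξ : Fin d → ℝ) (p : ℝ) (hp : 1 ≤ p)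
    (φT : Coeff d lam → Lat d → ℝ)
    (hφ : ∀ a : Coeff d lam, IsModCorrector d T ξ a.1 (φT a))
    (G : Coeff d lam → Lat d → Lat d → ℝ)
    (hG : ∀ (a : Coeff d lam) (y : Lat d), IsGreen d T a.1 y (fun x => G a x y)) :
    ∫ a, (∑' x : Lat d,
        specNorm (fun i k =>
            G a (unitv d i) (x + unitv d k) - G a (unitv d i) x
              - G a 0 (x + unitv d k) + G a 0 x) ^ 2
          * vnorm (fun i => dgrad (φT a) x i + ξ i) ^ 2) ^ p ∂μ
      ≤ lam ^ (-(2 * p)) * ∫ a, vnorm (fun i => dgrad (φT a) 0 i + ξ i) ^ (2 * p) ∂μ := by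
  set F : Coeff d lam → Lat d → ℝ := fun a x => vnorm (fun i => dgrad (φT a) x i + ξ i) ^ 2 with hF
  set Λ : ℝ := (lam ^ 2)⁻¹ with hΛ
  have hΛ0 : 0 < Λ := by positivity
  have hFeq : ∀ a x, F a x = ∑ i, (dgrad (φT a) x i + ξ i) ^ 2 := fun a x =>
    Real.sq_sqrt (Finset.sum_nonneg fun i _ => sq_nonneg _)
  have hF0 : ∀ a x, 0 ≤ F a x := fun a x => sq_nonneg _
  have hH0 : ∀ a x, 0 ≤ frob G a x := fun a x =>
    Finset.sum_nonneg fun i _ => Finset.sum_nonneg fun k _ => sq_nonneg _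
  have hH0' : ∀ a x, 0 ≤ frob' G a x := fun a x =>
    Finset.sum_nonneg fun i _ => Finset.sum_nonneg fun k _ => sq_nonneg _
  obtain ⟨M, hM⟩ := corrector_bound hlam0 hT hφ
  obtain ⟨B, hB⟩ : ∃ B, ∀ a x, F a x ≤ B := by
    refine ⟨∑ i, (2 * M + |ξ i|) ^ 2, fun a x => ?_⟩
    rw [hFeq]
    refine Finset.sum_le_sum fun i _ => ?_
    have h1 := abs_le.1 (hM a (x + unitv d i))
    have h2 := abs_le.1 (hM a x)
    have h3 := abs_le.1 (le_refl |ξ i|)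
    apply sq_le_sq' <;> simp only [dgrad] <;> linarith
  have hFcont : ∀ x, Continuous fun a => F a x := by
    intro x
    simp only [hFeq, dgrad]
    exact continuous_finsetSum _ fun i _ => (((corrector_continuous hlam0 hT hφ _).sub
      (corrector_continuous hlam0 hT hφ _)).add continuous_const).pow 2
  have hFp : ∀ x, Continuous fun a => F a x ^ p := fun x =>
    (hFcont x).rpow_const fun a => Or.inr (by linarith)
  have hFp0 : ∀ a x, 0 ≤ F a x ^ p := fun a x => Real.rpow_nonneg (hF0 a x) p
  have hHcont' : ∀ x, Continuous fun a => frob' G a x := fun x =>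
    continuous_finsetSum _ fun k _ => continuous_finsetSum _ fun i _ =>
      (((green_continuous hlam0 hT hG _ _).sub (green_continuous hlam0 hT hG _ _)).sub
        ((green_continuous hlam0 hT hG _ _).sub (green_continuous hlam0 hT hG _ _))).pow 2
  have hFshift : ∀ a x, F a x = F (shift x a) 0 := by
    intro a x
    have e : ∀ i, unitv d i + x = x + unitv d i := fun i => by abel
    simp only [hFeq, dgrad, corrector_shift hlam0 hT hφ, zero_add, e]
  have hHs : ∀ a, Summable (frob G a) ∧ ∑' x, frob G a x ≤ Λ := by
    intro a
    have h : frob G a = frob' G (transp a) := funext (frob_eq_transp hG a)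
    rw [h]
    exact frob'_energy hlam0 hlam1 hT hG (transp a)
  have hJ := fun a => tsum_jensen (p := p) hp hΛ0 (hH0 a) (hF0 a) (hB a) (hHs a).1 (hHs a).2
  -- the quenched bound: the integrand is at most `Λ^(p-1) ∑ |∇∇G|² |∇φ + ξ|^(2p)`
  have hpt : ∀ a, ‖(∑' x : Lat d, specNorm (mixedEntry G a x) ^ 2 * F a x) ^ p‖ₑ
      ≤ ENNReal.ofReal (Λ ^ (p - 1))
        * ∑' x, ENNReal.ofReal (frob' G (shift x a) (-x) * F (shift x a) 0 ^ p) := by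
    intro a
    obtain ⟨hs1, hs2, hle⟩ := hJ a
    have hterm : ∀ x, specNorm (mixedEntry G a x) ^ 2 * F a x ≤ frob G a x * F a x := fun x =>
      mul_le_mul_of_nonneg_right (specNorm_sq_le _) (hF0 a x)
    have hterm0 : ∀ x, 0 ≤ specNorm (mixedEntry G a x) ^ 2 * F a x := fun x =>
      mul_nonneg (sq_nonneg _) (hF0 a x)
    have hs0 := Summable.of_nonneg_of_le hterm0 hterm hs1
    have h1 : (∑' x : Lat d, specNorm (mixedEntry G a x) ^ 2 * F a x) ^ p
        ≤ Λ ^ (p - 1) * ∑' x, frob G a x * F a x ^ p :=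
      (Real.rpow_le_rpow (tsum_nonneg hterm0) (hs0.tsum_le_tsum hterm hs1) (by linarith)).trans hle
    rw [Real.enorm_eq_ofReal (Real.rpow_nonneg (tsum_nonneg hterm0) p)]
    refine (ENNReal.ofReal_le_ofReal h1).trans ?_
    rw [ENNReal.ofReal_mul (Real.rpow_nonneg hΛ0.le _),
      ENNReal.ofReal_tsum_of_nonneg (fun x => mul_nonneg (hH0 a x) (hFp0 a x)) hs2]
    simp only [frob_eq_shift hlam0 hT hG a, ← hFshift a, le_refl]
  have hmeas : ∀ x, Measurable fun a => ENNReal.ofReal (frob' G a (-x) * F a 0 ^ p) := fun x =>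
    ENNReal.measurable_ofReal.comp ((hHcont' (-x)).mul (hFp 0)).measurable
  have hint : Integrable (fun a => F a 0 ^ p) μ :=
    Integrable.of_bound (hFp 0).aestronglyMeasurable (B ^ p) (Filter.Eventually.of_forall fun a => by
      rw [Real.norm_of_nonneg (hFp0 a 0)]
      exact Real.rpow_le_rpow (hF0 a 0) (hB a 0) (by linarith))
  -- stationarity moves the sum to the first variable of the Green's function
  have hann : ∫⁻ a, ∑' x, ENNReal.ofReal (frob' G (shift x a) (-x) * F (shift x a) 0 ^ p) ∂μ
      ≤ ENNReal.ofReal Λ * ∫⁻ a, ENNReal.ofReal (F a 0 ^ p) ∂μ := by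
    have hmeas' : ∀ x, Measurable fun a =>
        ENNReal.ofReal (frob' G (shift x a) (-x) * F (shift x a) 0 ^ p) := fun x =>
      (hmeas x).comp (hstat x).measurable
    rw [lintegral_tsum fun x => (hmeas' x).aemeasurable]
    simp only [(hstat _).lintegral_comp (hmeas _)]
    rw [← lintegral_tsum fun x => (hmeas x).aemeasurable,
      ← lintegral_const_mul' _ _ ENNReal.ofReal_ne_top]
    refine lintegral_mono fun a => ?_
    obtain ⟨hs', hle'⟩ := frob'_neg_energy hlam0 hlam1 hT hG a
    simp only [ENNReal.ofReal_mul (hH0' _ _), ENNReal.tsum_mul_right]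
    rw [← ENNReal.ofReal_tsum_of_nonneg (fun x => hH0' _ _) hs']
    gcongr
  have hfin : ENNReal.ofReal (∫ a, (∑' x : Lat d, specNorm (mixedEntry G a x) ^ 2 * F a x) ^ p ∂μ)
      ≤ ENNReal.ofReal (Λ ^ p * ∫ a, F a 0 ^ p ∂μ) := by
    refine (Real.ofReal_le_enorm _).trans ((enorm_integral_le_lintegral_enorm _).trans ?_)
    refine (lintegral_mono hpt).trans ?_
    rw [lintegral_const_mul' _ _ ENNReal.ofReal_ne_top, ENNReal.ofReal_mul (by positivity),
      ofReal_integral_eq_lintegral_ofReal hint (Filter.Eventually.of_forall fun a => hFp0 a 0)]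
    refine (mul_le_mul_right hann _).trans (le_of_eq ?_)
    rw [← mul_assoc, ← ENNReal.ofReal_mul (Real.rpow_nonneg hΛ0.le _),
      ← Real.rpow_add_one hΛ0.ne', sub_add_cancel]
  have hI0 : 0 ≤ ∫ a, F a 0 ^ p ∂μ := integral_nonneg fun a => hFp0 a 0
  have hreal := (ENNReal.ofReal_le_ofReal_iff
    (mul_nonneg (Real.rpow_nonneg hΛ0.le p) hI0)).1 hfin
  have e1 : Λ ^ p = lam ^ (-(2 * p)) := by
    rw [hΛ, Real.rpow_neg hlam0.le, Real.rpow_mul hlam0.le, Real.inv_rpow (by positivity)]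
    norm_num
  have e2 : ∀ a, F a 0 ^ p = vnorm (fun i => dgrad (φT a) 0 i + ξ i) ^ (2 * p) := by
    intro a
    have h : 0 ≤ vnorm (fun i => dgrad (φT a) 0 i + ξ i) := Real.sqrt_nonneg _
    rw [Real.rpow_mul h, Real.rpow_two]
  simp only [e1, e2] at hreal
  exact hreal
end
end StochHom
end
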